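/- arXiv:1607.03286 — 2 statements merged into one kernel-verified Lean document; each statement's English description precedes it below -/
import Mathlib

section
/- For every Scott-closed subset A of ℍ and every k ∈ ℕ, the set T^A_{≥k} = {s ∈ ℕ* : the set A_s = {m ∈ ℕ : (m,s) ∈ A} has at least k elements} is Scott-closed in 𝒯. Consequently, the map l : ℍ → 𝒯, (m,s) ↦ s, is a closed map for the Scott topologies: the image l(A) of any Scott-closed subset A of ℍ is Scott-closed in 𝒯. -/
namespace HoZhao

variable {α : Type*}

/-- A set is Scott-closed if it is a lower set and contains the supremum of each of its
nonempty directed subsets. -/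
def ScottClosed [Preorder α] (S : Set α) : Prop :=
  IsLowerSet S ∧ ∀ d : Set α, d ⊆ S → d.Nonempty → DirectedOn (· ≤ ·) d →
    ∀ a : α, IsLUB d a → a ∈ S

/-- A nonempty set is irreducible if whenever it is covered by two Scott-closed sets it is
contained in one of them. -/
def ScottIrred [Preorder α] (A : Set α) : Prop :=
  A.Nonempty ∧ ∀ B C : Set α, ScottClosed B → ScottClosed C → A ⊆ B ∪ C → A ⊆ B ∨ A ⊆ C

/-- A dcpo: every nonempty directed subset has a supremum. -/
def IsDcpo (α : Type*) [Preorder α] : Prop :=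
  ∀ d : Set α, d.Nonempty → DirectedOn (· ≤ ·) d → ∃ a : α, IsLUB d a

/-- The order sobrification: the poset of Scott-closed irreducible subsets, ordered by
inclusion. -/
abbrev OrderSob (α : Type*) [Preorder α] :=
  {A : Set α // ScottClosed A ∧ ScottIrred A}

/-- The underlying set of the dcpo ℍ: pairs (m, s) with m ∈ ℕ and s ∈ ℕ*. -/
abbrev HPt := ℕ × List ℕ

/-- (m, n::s) <₁ (m, n'::s) iff n < n'. -/
def hlt1 (p q : HPt) : Prop :=
  ∃ (m n n' : ℕ) (s : List ℕ), n < n' ∧ p = (m, n :: s) ∧ q = (m, n' :: s)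

/-- (m, t++s) <₂ (m, s) iff t ≠ ε. -/
def hlt2 (p q : HPt) : Prop :=
  ∃ (m : ℕ) (t s : List ℕ), t ≠ [] ∧ p = (m, t ++ s) ∧ q = (m, s)

/-- (m, t++s) <₃ (m', s) iff t ≠ ε and min(t) ≤ m'. -/
def hlt3 (p q : HPt) : Prop :=
  ∃ (m m' : ℕ) (t s : List ℕ), t ≠ [] ∧ t.minimum ≤ (m' : ℕ) ∧
    p = (m, t ++ s) ∧ q = (m', s)

/-- The strict order < on ℍ: <₁ ∪ <₂ ∪ <₃ ∪ (<₂;<₁) ∪ (<₃;<₁). -/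
def hlt (p q : HPt) : Prop :=
  hlt1 p q ∨ hlt2 p q ∨ hlt3 p q ∨ (∃ r, hlt2 p r ∧ hlt1 r q) ∨ (∃ r, hlt3 p r ∧ hlt1 r q)

/-- The order ≤ on ℍ: < together with equality. -/
def hle (p q : HPt) : Prop := hlt p q ∨ p = q

/-- Least upper bound with respect to a relation r. -/
def IsLubRel {γ : Type*} (r : γ → γ → Prop) (s : Set γ) (a : γ) : Prop :=
  (∀ x ∈ s, r x a) ∧ ∀ b, (∀ x ∈ s, r x b) → r a b

/-- Scott-closedness with respect to a relation r: a lower set containing the r-suprema of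
its nonempty r-directed subsets. -/
def ScottClosedRel {γ : Type*} (r : γ → γ → Prop) (S : Set γ) : Prop :=
  (∀ x y, r x y → y ∈ S → x ∈ S) ∧
  ∀ d : Set γ, d ⊆ S → d.Nonempty → DirectedOn r d → ∀ a, IsLubRel r d a → a ∈ S

/-- Irreducibility with respect to a relation r. -/
def ScottIrredRel {γ : Type*} (r : γ → γ → Prop) (A : Set γ) : Prop :=
  A.Nonempty ∧ ∀ B C : Set γ, ScottClosedRel r B → ScottClosedRel r C → A ⊆ B ∪ C →
    A ⊆ B ∨ A ⊆ C

/-- n::u ⊏₁ n'::u iff n < n'. -/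
def tlt1 (s t : List ℕ) : Prop := ∃ (n n' : ℕ) (u : List ℕ), n < n' ∧ s = n :: u ∧ t = n' :: u

/-- u++t ⊏₂ t iff u ≠ ε. -/
def tlt2 (s t : List ℕ) : Prop := ∃ u : List ℕ, u ≠ [] ∧ s = u ++ t

/-- The strict order ⊏ on the tree 𝒯: ⊏₁ ∪ ⊏₂ ∪ (⊏₂;⊏₁). -/
def tlt (s t : List ℕ) : Prop := tlt1 s t ∨ tlt2 s t ∨ ∃ r, tlt2 s r ∧ tlt1 r t

/-- The order ⊑ on 𝒯: ⊏ together with equality. -/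
def tle (s t : List ℕ) : Prop := tlt s t ∨ s = t

/-!
In both orders `x` lies below `y` exactly when `x` arises from `y` by first possibly lowering the
head of its list and then prepending a list; in `ℍ` the two first coordinates must agree unless
the prepended list has an entry that does not exceed the first coordinate of `y`.

Let `A` be Scott-closed in `ℍ`. As `(m, u)` is the supremum of the chain of all `(m, n :: u)`, the
fiber of `A` over `u` is the intersection of the decreasing fibers over `n :: u`. This intersection
is attained: decreasing finite sets stabilize, while an infinite fiber is all of `ℕ`, because
`(m, n :: u) ≤ (m', u)` whenever `n ≤ m'`. A directed set in `𝒯` without a greatest element is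
cofinal with a chain of the same form `n :: u`, so every property of fibers that passes to larger
sets cuts out a Scott-closed set of `𝒯`.
-/

open Relation

theorem exists_eq_iInter_of_directed {ι : Type*} {F : ι → Set α} (hF : Directed (· ⊇ ·) F)
    (hfin : ∃ i, (F i).Finite) : ∃ i, F i = ⋂ j, F j := by
  obtain ⟨i, hi, hmin⟩ :=
    exists_minimalFor_of_wellFoundedLT (fun i => (F i).Finite) (fun i => (F i).ncard) hfin
  refine ⟨i, (Set.subset_iInter fun j => ?_).antisymm (Set.iInter_subset F i)⟩
  obtain ⟨l, hli, hlj⟩ := hF i j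
  have hncard : (F i).ncard ≤ (F l).ncard := hmin (hi.subset hli) (Set.ncard_le_ncard hli hi)
  rwa [← Set.eq_of_subset_of_ncard_le hli hncard hi]

section Orders

variable {m m' n n' : ℕ} {s t u : List ℕ}

theorem reflGen_tlt1_cons (h : n ≤ n') (u : List ℕ) : ReflGen tlt1 (n :: u) (n' :: u) := by
  rcases h.eq_or_lt with rfl | h
  · exact .refl
  · exact .single ⟨n, n', u, h, rfl, rfl⟩

theorem exists_eq_cons_of_reflGen_tlt1 (h : ReflGen tlt1 (n :: u) t) :
    ∃ n', n ≤ n' ∧ t = n' :: u := by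
  rcases h with _ | ⟨_, n', _, hn, ⟨⟩, rfl⟩
  · exact ⟨n, le_rfl, rfl⟩
  · exact ⟨n', hn.le, rfl⟩

theorem tail_eq_of_reflGen_tlt1 (h : ReflGen tlt1 s t) : s.tail = t.tail := by
  rcases h with _ | ⟨_, _, _, _, rfl, rfl⟩ <;> rfl

theorem length_eq_of_reflGen_tlt1 (h : ReflGen tlt1 s t) : s.length = t.length := by
  rcases h with _ | ⟨_, _, _, _, rfl, rfl⟩ <;> rfl

theorem tle_iff_exists_suffix : tle s t ↔ ∃ w, w <:+ s ∧ ReflGen tlt1 w t := by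
  constructor
  · rintro ((h | ⟨v, -, rfl⟩ | ⟨w, ⟨v, -, rfl⟩, h⟩) | rfl)
    · exact ⟨s, s.suffix_rfl, .single h⟩
    · exact ⟨t, v.suffix_append t, .refl⟩
    · exact ⟨w, v.suffix_append w, .single h⟩
    · exact ⟨s, s.suffix_rfl, .refl⟩
  · rintro ⟨w, ⟨v, rfl⟩, h⟩
    rcases eq_or_ne v [] with rfl | hv <;> rcases h with _ | h
    · exact .inr rfl
    · exact .inl (.inl h)
    · exact .inl (.inr (.inl ⟨v, hv, rfl⟩))
    · exact .inl (.inr (.inr ⟨w, ⟨v, hv, rfl⟩, h⟩))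

theorem hlt1_iff : hlt1 (m, s) (m', t) ↔ m = m' ∧ tlt1 s t := by
  simp only [hlt1, tlt1, Prod.mk.injEq]
  grind

theorem hle_iff_exists_append : hle (m, s) (m', t) ↔
    ∃ v w, s = v ++ w ∧ ReflGen tlt1 w t ∧ (m = m' ∨ ∃ x ∈ v, x ≤ m') := by
  constructor
  · rintro ((h | ⟨_, v, _, -, ⟨⟩, ⟨⟩⟩ | ⟨_, _, v, _, -, hmin, ⟨⟩, ⟨⟩⟩ |
      ⟨_, ⟨_, v, w, -, ⟨⟩, rfl⟩, h⟩ | ⟨_, ⟨_, _, v, w, -, hmin, ⟨⟩, rfl⟩, h⟩) | hst)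
    · obtain ⟨rfl, hst⟩ := hlt1_iff.1 h
      exact ⟨[], s, rfl, .single hst, .inl rfl⟩
    · exact ⟨v, t, rfl, .refl, .inl rfl⟩
    · exact ⟨v, t, rfl, .refl, .inr (List.minimum_le_coe_iff.1 hmin)⟩
    · obtain ⟨rfl, hwt⟩ := hlt1_iff.1 h
      exact ⟨v, w, rfl, .single hwt, .inl rfl⟩
    · obtain ⟨rfl, hwt⟩ := hlt1_iff.1 h
      exact ⟨v, w, rfl, .single hwt, .inr (List.minimum_le_coe_iff.1 hmin)⟩
    · obtain ⟨rfl, rfl⟩ := Prod.mk.inj hst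
      exact ⟨[], s, rfl, .refl, .inl rfl⟩
  · rintro ⟨v, w, rfl, h, rfl | hv⟩
    · rcases eq_or_ne v [] with rfl | hv <;> rcases h with _ | h
      · exact .inr rfl
      · exact .inl (.inl (hlt1_iff.2 ⟨rfl, h⟩))
      · exact .inl (.inr (.inl ⟨m, v, t, hv, rfl, rfl⟩))
      · exact .inl (.inr (.inr (.inr (.inl
          ⟨(m, w), ⟨m, v, w, hv, rfl, rfl⟩, hlt1_iff.2 ⟨rfl, h⟩⟩))))
    · have hvw : hlt3 (m, v ++ w) (m', w) :=
        ⟨m, m', v, w, List.ne_nil_of_mem hv.choose_spec.1, List.minimum_le_coe_iff.2 hv, rfl, rfl⟩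
      rcases h with _ | h
      · exact .inl (.inr (.inr (.inl hvw)))
      · exact .inl (.inr (.inr (.inr (.inr ⟨(m', w), hvw, hlt1_iff.2 ⟨rfl, h⟩⟩))))

theorem tle_nil (s : List ℕ) : tle s [] :=
  tle_iff_exists_suffix.2 ⟨[], List.nil_suffix, .refl⟩

theorem tle_cons_cons (h : n ≤ n') (u : List ℕ) : tle (n :: u) (n' :: u) :=
  tle_iff_exists_suffix.2 ⟨n :: u, List.suffix_rfl, reflGen_tlt1_cons h u⟩

theorem tle_cons_self (n : ℕ) (u : List ℕ) : tle (n :: u) u :=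
  tle_iff_exists_suffix.2 ⟨u, List.suffix_cons n u, .refl⟩

theorem tle_of_tle_cons (h : tle s (n :: u)) : tle s u := by
  obtain ⟨w, hw, hwu⟩ := tle_iff_exists_suffix.1 h
  have htail : w.tail = u := tail_eq_of_reflGen_tlt1 hwu
  exact tle_iff_exists_suffix.2 ⟨u, htail ▸ w.tail_suffix.trans hw, .refl⟩

theorem reflGen_tlt1_of_tle_of_length_le (h : tle s t) (hst : s.length ≤ t.length) :
    ReflGen tlt1 s t := by
  obtain ⟨w, hw, hwt⟩ := tle_iff_exists_suffix.1 h
  rwa [← hw.eq_of_length_le (hst.trans (length_eq_of_reflGen_tlt1 hwt).ge)]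

theorem hle_of_tle (m : ℕ) (h : tle s t) : hle (m, s) (m, t) := by
  obtain ⟨w, ⟨v, rfl⟩, hwt⟩ := tle_iff_exists_suffix.1 h
  exact hle_iff_exists_append.2 ⟨v, w, rfl, hwt, .inl rfl⟩

theorem hle_cons_of_le (m : ℕ) (h : n ≤ m') (u : List ℕ) : hle (m, n :: u) (m', u) :=
  hle_iff_exists_append.2 ⟨[n], u, rfl, .refl, .inr ⟨n, List.mem_singleton_self n, h⟩⟩

theorem hle_of_hle_cons_of_lt (hn : m' < n) (hnt : ∀ x ∈ t, x < n)
    (h : hle (m, n :: u) (m', t)) : hle (m, u) (m', t) := by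
  obtain ⟨v, w, hvw, hwt, hm⟩ := hle_iff_exists_append.1 h
  cases v with
  | nil =>
    obtain rfl : n :: u = w := hvw
    obtain ⟨n', hnn', rfl⟩ := exists_eq_cons_of_reflGen_tlt1 hwt
    exact absurd (hnt n' List.mem_cons_self) hnn'.not_gt
  | cons a v =>
    obtain ⟨rfl, rfl⟩ := List.cons.inj hvw
    have hm' : m = m' ∨ ∃ x ∈ v, x ≤ m' := by
      simpa only [List.exists_mem_cons_iff, hn.not_ge, false_or] using hm
    exact hle_iff_exists_append.2 ⟨v, w, rfl, hwt, hm'⟩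

end Orders

theorem isLubRel_range_cons (m : ℕ) (u : List ℕ) :
    IsLubRel hle (Set.range fun n => (m, n :: u)) (m, u) := by
  refine ⟨Set.forall_mem_range.2 fun n => hle_of_tle m (tle_cons_self n u), ?_⟩
  rintro ⟨p, t⟩ hb
  obtain ⟨N, hN⟩ := (p :: t).toFinset.exists_nat_subset_range
  have hlt : ∀ x ∈ p :: t, x < N := fun x hx => Finset.mem_range.1 (hN (List.mem_toFinset.2 hx))
  obtain ⟨hp, ht⟩ := List.forall_mem_cons.1 hlt
  exact hle_of_hle_cons_of_lt hp ht (hb _ ⟨N, rfl⟩)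

theorem directedOn_hle_range_cons (m : ℕ) (u : List ℕ) :
    DirectedOn hle (Set.range fun n => (m, n :: u)) :=
  directedOn_range.2 <| directed_of_isDirected_le fun _ _ h => hle_of_tle m (tle_cons_cons h u)

/-- The set `A_s = {m | (m, s) ∈ A}` of first coordinates of the points of `A` at level `s`. -/
def fiber (A : Set HPt) (s : List ℕ) : Set ℕ := {m | (m, s) ∈ A}

section Fiber

variable {A : Set HPt}

theorem fiber_subset_fiber_of_tle (hlow : ∀ p q, hle p q → q ∈ A → p ∈ A) {s t : List ℕ}
    (h : tle s t) : fiber A t ⊆ fiber A s :=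
  fun m hm => hlow _ _ (hle_of_tle m h) hm

theorem antitone_fiber_cons (hlow : ∀ p q, hle p q → q ∈ A → p ∈ A) (u : List ℕ) :
    Antitone fun n => fiber A (n :: u) :=
  fun _ _ h => fiber_subset_fiber_of_tle hlow (tle_cons_cons h u)

theorem iInter_fiber_cons (hA : ScottClosedRel hle A) (u : List ℕ) :
    ⋂ n, fiber A (n :: u) = fiber A u := by
  refine Set.Subset.antisymm (fun m hm => ?_)
    (Set.subset_iInter fun n => fiber_subset_fiber_of_tle hA.1 (tle_cons_self n u))
  have hmem : ∀ n, (m, n :: u) ∈ A := Set.mem_iInter.1 hm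
  exact hA.2 _ (Set.range_subset_iff.2 hmem) (Set.range_nonempty _)
    (directedOn_hle_range_cons m u) _ (isLubRel_range_cons m u)

theorem fiber_eq_univ_of_infinite (hA : ScottClosedRel hle A) {u : List ℕ}
    (h : (fiber A u).Infinite) : fiber A u = Set.univ := by
  refine Set.eq_univ_of_forall fun m => iInter_fiber_cons hA u ▸ Set.mem_iInter.2 fun n => ?_
  obtain ⟨m', hm', hn⟩ := h.exists_gt n
  exact hA.1 _ _ (hle_cons_of_le m hn.le u) hm'

theorem exists_fiber_cons_eq (hA : ScottClosedRel hle A) (u : List ℕ) :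
    ∃ n, fiber A (n :: u) = fiber A u := by
  by_cases hfin : ∃ n, (fiber A (n :: u)).Finite
  · rw [← iInter_fiber_cons hA]
    exact exists_eq_iInter_of_directed (antitone_fiber_cons hA.1 u).directed_ge hfin
  · have huniv : ∀ n, fiber A (n :: u) = Set.univ := fun n =>
      fiber_eq_univ_of_infinite hA fun h => hfin ⟨n, h⟩
    exact ⟨0, by simp only [← iInter_fiber_cons hA u, huniv, Set.iInter_univ]⟩

end Fiber

theorem exists_greatest_or_not_bddAbove_cons {d : Set (List ℕ)} (hne : d.Nonempty)
    (hd : DirectedOn tle d) :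
    (∃ x ∈ d, ∀ y ∈ d, tle y x) ∨ ∃ u, ¬BddAbove {n | n :: u ∈ d} ∧ ∀ y ∈ d, tle y u := by
  obtain ⟨x, hx⟩ := exists_minimalFor_of_wellFoundedLT (· ∈ d) List.length hne
  have hmin : ∀ z ∈ d, x.length ≤ z.length := fun z hz => le_of_not_gt (hx.not_lt hz)
  cases x with
  | nil => exact .inl ⟨[], hx.prop, fun y _ => tle_nil y⟩
  | cons n u =>
    have above : ∀ k, k :: u ∈ d → ∀ y ∈ d, ∃ k', k ≤ k' ∧ k' :: u ∈ d ∧ tle y (k' :: u) := by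
      intro k hk y hy
      obtain ⟨z, hz, hkz, hyz⟩ := hd _ hk y hy
      obtain ⟨k', hkk', rfl⟩ :=
        exists_eq_cons_of_reflGen_tlt1 (reflGen_tlt1_of_tle_of_length_le hkz (hmin z hz))
      exact ⟨k', hkk', hz, hyz⟩
    by_cases hbdd : BddAbove {k | k :: u ∈ d}
    · have hmax : sSup {k | k :: u ∈ d} :: u ∈ d := Nat.sSup_mem ⟨n, hx.prop⟩ hbdd
      refine .inl ⟨_, hmax, fun y hy => ?_⟩
      obtain ⟨k, hk, hkd, hyk⟩ := above _ hmax y hy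
      rwa [hk.antisymm (le_csSup hbdd hkd)]
    · refine .inr ⟨u, hbdd, fun y hy => ?_⟩
      obtain ⟨k, -, -, hyk⟩ := above n hx.prop y hy
      exact tle_of_tle_cons hyk

theorem scottClosedRel_tle_of_forall_cons_mem {S : Set (List ℕ)}
    (hlow : ∀ s t, tle s t → t ∈ S → s ∈ S) (hcons : ∀ u, (∀ n, n :: u ∈ S) → u ∈ S) :
    ScottClosedRel tle S := by
  refine ⟨hlow, fun d hdS hne hd a ha => ?_⟩
  rcases exists_greatest_or_not_bddAbove_cons hne hd with ⟨x, hx, hub⟩ | ⟨u, hunbdd, hub⟩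
  · exact hlow a x (ha.2 x hub) (hdS hx)
  · refine hlow a u (ha.2 u hub) (hcons u fun n => ?_)
    obtain ⟨n', hmem, hn⟩ := not_bddAbove_iff.1 hunbdd n
    exact hlow _ _ (tle_cons_cons hn.le u) (hdS hmem)

theorem scottClosedRel_setOf_fiber_mem {A : Set HPt} (hA : ScottClosedRel hle A)
    {U : Set (Set ℕ)} (hU : IsUpperSet U) : ScottClosedRel tle {s | fiber A s ∈ U} := by
  refine scottClosedRel_tle_of_forall_cons_mem
    (fun s t h ht => hU (fiber_subset_fiber_of_tle hA.1 h) ht) fun u hu => ?_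
  obtain ⟨n, hn⟩ := exists_fiber_cons_eq hA u
  have hnu : fiber A (n :: u) ∈ U := hu n
  rwa [hn] at hnu

theorem image_snd_eq_setOf_fiber_nonempty (A : Set HPt) :
    Prod.snd '' A = {s | (fiber A s).Nonempty} := by
  ext s
  simp [fiber, Set.Nonempty]

/-- for every Scott-closed A ⊆ ℍ and every k, the set
T^A_{≥k} = {s : A_s has at least k elements} is Scott-closed in 𝒯; consequently the level
map l : ℍ → 𝒯 is a closed map. -/
theorem level_sets_closed_and_level_map_closed :
    (∀ A : Set HPt, ScottClosedRel hle A → ∀ k : ℕ,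
      ScottClosedRel tle {s : List ℕ | (k : ℕ∞) ≤ {m : ℕ | ((m, s) : HPt) ∈ A}.encard}) ∧
    (∀ A : Set HPt, ScottClosedRel hle A → ScottClosedRel tle (Prod.snd '' A)) := by
  refine ⟨fun A hA k => ?_, fun A hA => ?_⟩
  · exact scottClosedRel_setOf_fiber_mem hA (U := {S | (k : ℕ∞) ≤ S.encard})
      fun S T hST hS => le_trans hS (Set.encard_le_encard hST)
  · rw [image_snd_eq_setOf_fiber_nonempty]
    exact scottClosedRel_setOf_fiber_mem hA (U := {S | S.Nonempty}) fun S T hST hS => hS.mono hST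

end HoZhao
end

section
/- The closed irreducible subsets of ℍ are exactly the down-closures ↓x of single points x ∈ ℍ and the down-closures ↓L_s of levels L_s = {(m,s) : m ∈ ℕ}, s ∈ ℕ*. Moreover, the lattices Γ(ℍ) and Γ(ℍ̂) of Scott-closed subsets are order-isomorphic, while ℍ and its order sobrification ℍ̂ are not order-isomorphic (ℍ̂ has a largest element and ℍ does not); hence the class of all dcpos is not Γ-faithful. -/
/-!
A subset of ℍ is Scott-closed iff it is a lower set that contains `(m, s)` as soon as it contains
the column `(m, n :: s)`, `n ∈ ℕ`. Since `(m, n :: s) ≤ (m', s)` for `n ≤ m'`, a closed set that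
contains infinitely many points of a level contains the whole level. Let `A` be closed irreducible.
Every point of `A` lies below a maximal one, so `A` is contained in `↓x` (or `↓L_s`) together with
the down-closure of the maximal points not in it. The crux is that this down-closure is closed, a
pigeonhole argument; irreducibility then forces `A = ↓x` or `A = ↓L_s`.

For the isomorphism `Γ(ℍ) ≅ Γ(ℍ̂)`, `A ↦ {B | B ⊆ A}`, one has to see that a closed `𝒜 ⊆ ℍ̂`
contains `↓L_s` whenever it contains `↓(m, s)` for all `m`: as `↓L_{n::s} ⊆ ↓(n, s)`, it contains
each `↓L_{n::s}`, hence their supremum `↓L_s`.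
-/

namespace HoZhao

variable {α : Type*}

/-- The order sobrification ℍ̂: closed irreducible subsets of ℍ, ordered by inclusion. -/
abbrev HSob := {A : Set HPt // ScottClosedRel hle A ∧ ScottIrredRel hle A}

/-- A' ◁ A in ℍ̂: A' ⊆ ↓x for some x ∈ A. -/
def TriH (A' A : HSob) : Prop := ∃ x ∈ A.val, A'.val ⊆ {y : HPt | hle y x}

/-- ∇A in ℍ̂. -/
def NablaH (A : HSob) : Set HSob := {A' | TriH A' A}

open Filter

section Relation

variable {γ : Type*} {r : γ → γ → Prop} {A N S X : Set γ}

/-- The dcpo property of a relation: every nonempty directed set has a least upper bound. -/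
def IsDcpoRel (r : γ → γ → Prop) : Prop :=
  ∀ d : Set γ, d.Nonempty → DirectedOn r d → ∃ a, IsLubRel r d a

/-- The down-closure `↓N`. -/
def downClosure (r : γ → γ → Prop) (N : Set γ) : Set γ := {y | ∃ x ∈ N, r y x}

/-- The set `Max A` of maximal elements of `A`, for an antisymmetric relation. -/
def relMaximals (r : γ → γ → Prop) (A : Set γ) : Set γ := {a | a ∈ A ∧ ∀ b ∈ A, r a b → b = a}

/-- The Scott closure: the least Scott-closed set containing `X`. -/
def scottClosure (r : γ → γ → Prop) (X : Set γ) : Set γ := ⋂₀ {S | ScottClosedRel r S ∧ X ⊆ S}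

/-- The order sobrification of a set with a relation `r`; `HSob` is `RelSob hle`. -/
abbrev RelSob (r : γ → γ → Prop) := {A : Set γ // ScottClosedRel r A ∧ ScottIrredRel r A}

lemma ScottClosedRel.downClosure_subset (hA : ScottClosedRel r A) (hN : N ⊆ A) :
    downClosure r N ⊆ A :=
  fun _ ⟨_, hx, hyx⟩ => hA.1 _ _ hyx (hN hx)

lemma subset_scottClosure : X ⊆ scottClosure r X :=
  Set.subset_sInter fun _ hS => hS.2

lemma ScottClosedRel.scottClosure_subset_iff (hS : ScottClosedRel r S) :
    scottClosure r X ⊆ S ↔ X ⊆ S :=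
  ⟨subset_scottClosure.trans, fun h => Set.sInter_subset_of_mem ⟨hS, h⟩⟩

lemma scottClosedRel_scottClosure : ScottClosedRel r (scottClosure r X) :=
  ⟨fun _ _ hxy hy S hS => hS.1.1 _ _ hxy (hy S hS),
    fun d hd hne hdir a ha S hS => hS.1.2 d (fun _ hx => hd hx S hS) hne hdir a ha⟩

lemma ScottIrredRel.scottClosure (hX : ScottIrredRel r X) :
    ScottIrredRel r (scottClosure r X) := by
  refine ⟨hX.1.mono subset_scottClosure, fun B C hB hC h => ?_⟩
  rw [hB.scottClosure_subset_iff, hC.scottClosure_subset_iff]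
  exact hX.2 B C hB hC (subset_scottClosure.trans h)

lemma scottIrredRel_sUnion_of_directedOn {𝒞 : Set (Set γ)} (hne : 𝒞.Nonempty)
    (hdir : DirectedOn (· ⊆ ·) 𝒞) (h𝒞 : ∀ A ∈ 𝒞, ScottIrredRel r A) :
    ScottIrredRel r (⋃₀ 𝒞) := by
  obtain ⟨A₀, hA₀⟩ := hne
  refine ⟨(h𝒞 A₀ hA₀).1.mono (Set.subset_sUnion_of_mem hA₀), fun B C hB hC hBC => ?_⟩
  by_contra! ⟨hnB, hnC⟩
  simp only [Set.sUnion_subset_iff, not_forall] at hnB hnC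
  obtain ⟨A₁, hA₁, hnB⟩ := hnB
  obtain ⟨A₂, hA₂, hnC⟩ := hnC
  obtain ⟨E, hE, h₁, h₂⟩ := hdir A₁ hA₁ A₂ hA₂
  rcases (h𝒞 E hE).2 B C hB hC ((Set.subset_sUnion_of_mem hE).trans hBC) with h | h
  · exact hnB (h₁.trans h)
  · exact hnC (h₂.trans h)

lemma ScottClosedRel.exists_relMaximals [IsPartialOrder γ r] (hr : IsDcpoRel r)
    (hA : ScottClosedRel r A) {p : γ} (hp : p ∈ A) : ∃ a ∈ relMaximals r A, r p a := by
  let Above := {a // a ∈ A ∧ r p a}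
  have : Nonempty Above := ⟨p, hp, refl_of r p⟩
  obtain ⟨⟨a, haA, hpa⟩, hmax⟩ : ∃ a : Above, ∀ b : Above, r a b → r b a := by
    refine exists_maximal_of_nonempty_chains_bounded (fun c hc hne => ?_) (trans_of r)
    have hdir : DirectedOn r (Subtype.val '' c) :=
      (IsChain.image_of_map_rel _ r Subtype.val (fun _ _ h => h) hc).directedOn
    obtain ⟨a, ha⟩ := hr _ (hne.image _) hdir
    have haA : a ∈ A := hA.2 _ (by rintro _ ⟨x, -, rfl⟩; exact x.2.1) (hne.image _) hdir a ha
    obtain ⟨x, hx⟩ := hne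
    exact ⟨⟨a, haA, trans_of r x.2.2 (ha.1 x ⟨x, hx, rfl⟩)⟩, fun y hy => ha.1 y ⟨y, hy, rfl⟩⟩
  exact ⟨a, ⟨haA, fun b hb hab =>
    antisymm_of r (hmax ⟨b, hb, trans_of r hpa hab⟩ hab) hab⟩, hpa⟩

lemma ScottIrredRel.subset_of_relMaximals_mem [IsPartialOrder γ r] (hr : IsDcpoRel r)
    (hA : ScottClosedRel r A) (hI : ScottIrredRel r A) {C : Set γ} (hC : ScottClosedRel r C)
    (hdiff : ScottClosedRel r (downClosure r (relMaximals r A \ C))) {a : γ}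
    (ha : a ∈ relMaximals r A) (haC : a ∈ C) : A ⊆ C := by
  have hcover : A ⊆ C ∪ downClosure r (relMaximals r A \ C) := by
    intro p hp
    obtain ⟨b, hb, hpb⟩ := hA.exists_relMaximals hr hp
    by_cases hbC : b ∈ C
    · exact Or.inl (hC.1 _ _ hpb hbC)
    · exact Or.inr ⟨b, ⟨hb, hbC⟩, hpb⟩
  refine (hI.2 _ _ hC hdiff hcover).resolve_right fun h => ?_
  obtain ⟨b, ⟨hb, hbC⟩, hab⟩ := h ha.1
  exact hbC (ha.2 b hb.1 hab ▸ haC)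

lemma scottClosedRel_principal [IsTrans γ r] (x : γ) : ScottClosedRel r {y | r y x} :=
  ⟨fun _ _ => trans_of r, fun _ hd _ _ _ ha => ha.2 x hd⟩

lemma scottIrredRel_principal [Std.Refl r] (x : γ) : ScottIrredRel r {y | r y x} := by
  refine ⟨⟨x, refl_of r x⟩, fun B C hB hC h => ?_⟩
  exact (h (refl_of r x)).imp (fun hx y hy => hB.1 y x hy hx) (fun hx y hy => hC.1 y x hy hx)

end Relation

section Sobrification

variable {γ : Type*} {r : γ → γ → Prop}

lemma RelSob.exists_isLUB_eq_scottClosure {d : Set (RelSob r)} (hne : d.Nonempty)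
    (hdir : DirectedOn (· ≤ ·) d) :
    ∃ B : RelSob r, IsLUB d B ∧ B.1 = scottClosure r (⋃₀ (Subtype.val '' d)) := by
  have hirr : ScottIrredRel r (⋃₀ (Subtype.val '' d)) :=
    scottIrredRel_sUnion_of_directedOn (hne.image _) (directedOn_image.2 hdir)
      (by rintro _ ⟨B, -, rfl⟩; exact B.2.2)
  refine ⟨⟨_, scottClosedRel_scottClosure, hirr.scottClosure⟩,
    ⟨fun B hB => ?_, fun B hB => ?_⟩, rfl⟩
  · exact (Set.subset_sUnion_of_mem (Set.mem_image_of_mem _ hB)).trans subset_scottClosure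
  · refine B.2.1.scottClosure_subset_iff.2 (Set.sUnion_subset ?_)
    rintro _ ⟨C, hC, rfl⟩
    exact hB hC

lemma isDcpo_relSob : IsDcpo (RelSob r) := fun _ hne hdir =>
  let ⟨B, hB, _⟩ := RelSob.exists_isLUB_eq_scottClosure hne hdir
  ⟨B, hB⟩

lemma ScottClosedRel.scottClosed_setOf_subset {A : Set γ} (hA : ScottClosedRel r A) :
    ScottClosed {B : RelSob r | B.1 ⊆ A} := by
  refine ⟨fun B B' hB'B hB => Set.Subset.trans hB'B hB, fun d hdA hne hdir a ha => ?_⟩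
  obtain ⟨B, hB, hBval⟩ := RelSob.exists_isLUB_eq_scottClosure hne hdir
  obtain rfl := ha.unique hB
  rw [Set.mem_ofPred_eq, hBval, hA.scottClosure_subset_iff, Set.sUnion_subset_iff]
  rintro _ ⟨C, hC, rfl⟩
  exact hdA hC

variable [IsPreorder γ r]

/-- The principal ideal `↓x` as an element of the order sobrification. -/
def RelSob.principal (r : γ → γ → Prop) [IsPreorder γ r] (x : γ) : RelSob r :=
  ⟨{y | r y x}, scottClosedRel_principal x, scottIrredRel_principal x⟩

lemma RelSob.principal_le_iff {x : γ} {B : RelSob r} : principal r x ≤ B ↔ x ∈ B.1 :=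
  ⟨fun h => h (refl_of r x), fun hx y hy => B.2.1.1 y x hy hx⟩

lemma RelSob.principal_mono {x y : γ} (h : r x y) : principal r x ≤ principal r y :=
  principal_le_iff.2 h

lemma ScottClosed.scottClosedRel_setOf_principal_mem {𝒜 : Set (RelSob r)} (h𝒜 : ScottClosed 𝒜) :
    ScottClosedRel r {x | RelSob.principal r x ∈ 𝒜} := by
  refine ⟨fun x y hxy hy => h𝒜.1 (RelSob.principal_mono hxy) hy,
    fun d hd hne hdir a ha => h𝒜.2 (RelSob.principal r '' d) (Set.image_subset_iff.2 hd)
      (hne.image _) (hdir.mono_comp fun _ _ => RelSob.principal_mono) _ ⟨?_, fun B hB => ?_⟩⟩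
  · rintro _ ⟨x, hx, rfl⟩
    exact RelSob.principal_mono (ha.1 x hx)
  · exact RelSob.principal_le_iff.2 (B.2.1.2 d
      (fun x hx => RelSob.principal_le_iff.1 (hB ⟨x, hx, rfl⟩)) hne hdir a ha)

/-- The isomorphism `Γ(D) ≅ Γ(D̂)`, `A ↦ {B | B ⊆ A}`, for those `D` in which the closed subsets of
`D̂` are determined by the principal ideals they contain. -/
def scottClosedRelOrderIsoRelSob
    (h : ∀ 𝒜 : Set (RelSob r), ScottClosed 𝒜 → ∀ B : RelSob r,
      (∀ x ∈ B.1, RelSob.principal r x ∈ 𝒜) → B ∈ 𝒜) :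
    {A : Set γ // ScottClosedRel r A} ≃o {𝒜 : Set (RelSob r) // ScottClosed 𝒜} where
  toFun A := ⟨{B | B.1 ⊆ A.1}, A.2.scottClosed_setOf_subset⟩
  invFun 𝒜 := ⟨{x | RelSob.principal r x ∈ 𝒜.1}, 𝒜.2.scottClosedRel_setOf_principal_mem⟩
  left_inv A := Subtype.ext <| Set.ext fun x =>
    ⟨fun hx => hx (refl_of r x), fun hx y hy => A.2.1 y x hy hx⟩
  right_inv 𝒜 := Subtype.ext <| Set.ext fun B =>
    ⟨h 𝒜.1 𝒜.2 B, fun hB _ hx => 𝒜.2.1 (RelSob.principal_le_iff.2 hx) hB⟩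
  map_rel_iff' {A A'} := by
    refine ⟨fun hAA' x hx => ?_, fun hAA' B hB => Set.Subset.trans hB hAA'⟩
    have hxA : (RelSob.principal r x).1 ⊆ A.1 := fun y hy => A.2.1 y x hy hx
    exact hAA' hxA (refl_of r x)

end Sobrification

section Preorder

variable [Preorder α]

lemma isLubRel_le_iff {s : Set α} {a : α} : IsLubRel (· ≤ ·) s a ↔ IsLUB s a := Iff.rfl

lemma scottClosedRel_le_iff {S : Set α} : ScottClosedRel (· ≤ ·) S ↔ ScottClosed S :=
  and_congr ⟨fun h _ _ hba ha => h _ _ hba ha, fun h _ _ hxy hy => h hxy hy⟩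
    (by simp only [isLubRel_le_iff])

lemma IsDcpoRel.isDcpo (h : IsDcpoRel ((· ≤ ·) : α → α → Prop)) : IsDcpo α := fun d hne hdir =>
  (h d hne hdir).imp fun _ => isLubRel_le_iff.1

/-- The two encodings of `Γ(α)`, through the order and through the relation `≤`, agree. -/
def scottClosedOrderIsoRel (α : Type*) [Preorder α] :
    {S : Set α // ScottClosed S} ≃o {S : Set α // ScottClosedRel (· ≤ ·) S} where
  toEquiv := Equiv.subtypeEquivRight fun _ => scottClosedRel_le_iff.symm
  map_rel_iff' := Iff.rfl

end Preorder

section Order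

/-- `HeadLE v w` says that `w` is `v` with its first letter possibly increased, i.e. that
`(m, v)` and `(m, w)` are equal or related by `<₁`. -/
inductive HeadLE : List ℕ → List ℕ → Prop
  | nil : HeadLE [] []
  | cons {n n' : ℕ} (h : n ≤ n') (s : List ℕ) : HeadLE (n :: s) (n' :: s)

lemma HeadLE.refl : ∀ s : List ℕ, HeadLE s s
  | [] => .nil
  | _ :: s => .cons le_rfl s

lemma HeadLE.trans {u v w : List ℕ} (huv : HeadLE u v) (hvw : HeadLE v w) : HeadLE u w := by
  cases huv with
  | nil => exact hvw
  | cons h s =>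
    cases hvw with
    | cons h' => exact .cons (h.trans h') s

lemma HeadLE.antisymm {v w : List ℕ} (hvw : HeadLE v w) (hwv : HeadLE w v) : v = w := by
  cases hvw with
  | nil => rfl
  | cons h s =>
    cases hwv with
    | cons h' => rw [h.antisymm h']

lemma HeadLE.length_eq {v w : List ℕ} (h : HeadLE v w) : v.length = w.length := by
  cases h <;> rfl

lemma HeadLE.le_sum {n : ℕ} {s w : List ℕ} (h : HeadLE (n :: s) w) : n ≤ w.sum := by
  cases h with
  | cons h => exact h.trans (by simp)

lemma eq_or_hlt1_iff {p q : HPt} : p = q ∨ hlt1 p q ↔ p.1 = q.1 ∧ HeadLE p.2 q.2 := by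
  obtain ⟨m, v⟩ := p
  obtain ⟨m', w⟩ := q
  constructor
  · rintro (h | ⟨_, n, n', s, hn, h, h'⟩)
    · cases h
      exact ⟨rfl, .refl v⟩
    · cases h
      cases h'
      exact ⟨rfl, .cons hn.le s⟩
  · rintro ⟨rfl : m = m', h⟩
    cases h with
    | nil => exact Or.inl rfl
    | cons h s => exact h.eq_or_lt.imp (by rintro rfl; rfl) fun h => ⟨m, _, _, s, h, rfl, rfl⟩

lemma eq_or_hlt2_or_hlt3_iff {p q : HPt} :
    p = q ∨ hlt2 p q ∨ hlt3 p q ↔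
      ∃ t, p.2 = t ++ q.2 ∧ (p.1 = q.1 ∨ ∃ x ∈ t, x ≤ q.1) := by
  constructor
  · rintro (rfl | ⟨m, t, s, -, rfl, rfl⟩ | ⟨m, m', t, s, -, hmin, rfl, rfl⟩)
    · exact ⟨[], rfl, Or.inl rfl⟩
    · exact ⟨t, rfl, Or.inl rfl⟩
    · exact ⟨t, rfl, Or.inr (List.minimum_le_coe_iff.1 hmin)⟩
  · obtain ⟨m, v⟩ := p
    obtain ⟨m', s⟩ := q
    rintro ⟨t, rfl : v = t ++ s, hm⟩
    rcases eq_or_ne t [] with rfl | ht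
    · exact Or.inl (by simpa using hm)
    · rcases hm with rfl | hmin
      · exact Or.inr (Or.inl ⟨m, t, s, ht, rfl, rfl⟩)
      · exact Or.inr (Or.inr ⟨m, m', t, s, ht, List.minimum_le_coe_iff.2 hmin, rfl, rfl⟩)

lemma hle_iff_exists_comp {p q : HPt} :
    hle p q ↔ ∃ x, (p = x ∨ hlt2 p x ∨ hlt3 p x) ∧ (x = q ∨ hlt1 x q) := by
  constructor
  · rintro ((h | h | h | ⟨x, h, h'⟩ | ⟨x, h, h'⟩) | h)
    · exact ⟨p, Or.inl rfl, Or.inr h⟩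
    · exact ⟨q, Or.inr (Or.inl h), Or.inl rfl⟩
    · exact ⟨q, Or.inr (Or.inr h), Or.inl rfl⟩
    · exact ⟨x, Or.inr (Or.inl h), Or.inr h'⟩
    · exact ⟨x, Or.inr (Or.inr h), Or.inr h'⟩
    · exact ⟨p, Or.inl rfl, Or.inl h⟩
  · rintro ⟨x, rfl | h | h, rfl | h'⟩
    · exact Or.inr rfl
    · exact Or.inl (Or.inl h')
    · exact Or.inl (Or.inr (Or.inl h))
    · exact Or.inl (Or.inr (Or.inr (Or.inr (Or.inl ⟨x, h, h'⟩))))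
    · exact Or.inl (Or.inr (Or.inr (Or.inl h)))
    · exact Or.inl (Or.inr (Or.inr (Or.inr (Or.inr ⟨x, h, h'⟩))))

lemma hle_mk_iff {m m' : ℕ} {u w : List ℕ} :
    hle (m, u) (m', w) ↔
      ∃ t v, u = t ++ v ∧ HeadLE v w ∧ (m = m' ∨ ∃ x ∈ t, x ≤ m') := by
  simp only [hle_iff_exists_comp, eq_or_hlt2_or_hlt3_iff, eq_or_hlt1_iff, Prod.exists]
  constructor
  · rintro ⟨_, v, ⟨t, rfl, hm⟩, rfl, hvw⟩
    exact ⟨t, v, rfl, hvw, hm⟩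
  · rintro ⟨t, v, rfl, hvw, hm⟩
    exact ⟨m', v, ⟨t, rfl, hm⟩, rfl, hvw⟩

lemma HeadLE.hle {v w : List ℕ} (h : HeadLE v w) (m : ℕ) : hle (m, v) (m, w) :=
  hle_mk_iff.2 ⟨[], v, rfl, h, Or.inl rfl⟩

lemma hle_refl (p : HPt) : hle p p := Or.inr rfl

lemma hle_trans {p q x : HPt} (hpq : hle p q) (hqx : hle q x) : hle p x := by
  obtain ⟨m, u⟩ := p
  obtain ⟨m', u'⟩ := q
  obtain ⟨m'', w⟩ := x
  obtain ⟨t, v, rfl, hv, hm⟩ := hle_mk_iff.1 hpq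
  obtain ⟨t', v', rfl, hv', hm'⟩ := hle_mk_iff.1 hqx
  rw [hle_mk_iff]
  cases t' with
  | nil =>
    obtain rfl : m' = m'' := by simpa using hm'
    exact ⟨t, v, rfl, hv.trans hv', hm⟩
  | cons b t' =>
    obtain ⟨a, hab, rfl⟩ : ∃ a ≤ b, v = a :: (t' ++ v') := by
      cases hv with
      | cons h => exact ⟨_, h, rfl⟩
    refine ⟨t ++ a :: t', v', by simp, hv', ?_⟩
    rcases hm' with rfl | ⟨x, hx, hxm⟩
    · exact hm.imp_right fun ⟨x, hx, hxm⟩ => ⟨x, List.mem_append_left _ hx, hxm⟩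
    · rcases List.mem_cons.1 hx with rfl | hx
      · exact Or.inr ⟨a, by simp, hab.trans hxm⟩
      · exact Or.inr ⟨x, by simp [hx], hxm⟩

lemma length_le_of_hle {p q : HPt} (h : hle p q) : q.2.length ≤ p.2.length := by
  obtain ⟨t, v, hp, hvq, -⟩ := hle_mk_iff.1 h
  simp [hp, ← hvq.length_eq]

lemma fst_eq_and_headLE_of_hle_of_length_le {p q : HPt} (h : hle p q)
    (hlen : p.2.length ≤ q.2.length) : p.1 = q.1 ∧ HeadLE p.2 q.2 := by
  obtain ⟨t, v, hp, hvq, hm⟩ := hle_mk_iff.1 h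
  obtain rfl : t = [] := by
    rw [hp, ← hvq.length_eq, List.length_append] at hlen
    exact List.length_eq_zero_iff.1 (by omega)
  exact ⟨by simpa using hm, hp ▸ hvq⟩

lemma hle_antisymm {p q : HPt} (hpq : hle p q) (hqp : hle q p) : p = q := by
  obtain ⟨hm, hpq'⟩ := fst_eq_and_headLE_of_hle_of_length_le hpq (length_le_of_hle hqp)
  obtain ⟨-, hqp'⟩ := fst_eq_and_headLE_of_hle_of_length_le hqp (length_le_of_hle hpq)
  exact Prod.ext hm (hpq'.antisymm hqp')

instance : IsPartialOrder HPt hle where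
  refl := hle_refl
  trans _ _ _ := hle_trans
  antisymm _ _ := hle_antisymm

lemma hle_cons_iff {m n m' : ℕ} {s w : List ℕ} :
    hle (m, n :: s) (m', w) ↔
      m = m' ∧ HeadLE (n :: s) w ∨ hle (m, s) (m', w) ∨ n ≤ m' ∧ hle (m', s) (m', w) := by
  simp only [hle_mk_iff]
  constructor
  · rintro ⟨_ | ⟨a, t⟩, v, h, hvw, hm⟩
    · exact Or.inl ⟨by simpa using hm, h ▸ hvw⟩
    · obtain ⟨rfl, rfl⟩ := List.cons.inj h
      rcases hm with rfl | ⟨x, hx, hxm⟩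
      · exact Or.inr (Or.inl ⟨t, v, rfl, hvw, Or.inl rfl⟩)
      · rcases List.mem_cons.1 hx with rfl | hx
        · exact Or.inr (Or.inr ⟨hxm, t, v, rfl, hvw, Or.inl trivial⟩)
        · exact Or.inr (Or.inl ⟨t, v, rfl, hvw, Or.inr ⟨x, hx, hxm⟩⟩)
  · rintro (⟨rfl, h⟩ | ⟨t, v, rfl, hvw, hm⟩ | ⟨hn, t, v, rfl, hvw, -⟩)
    · exact ⟨[], n :: s, rfl, h, Or.inl rfl⟩
    · exact ⟨n :: t, v, rfl, hvw, hm.imp_right fun ⟨x, hx, hxm⟩ => ⟨x, .tail _ hx, hxm⟩⟩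
    · exact ⟨n :: t, v, rfl, hvw, Or.inr ⟨n, .head _, hn⟩⟩

lemma hle_tail (m n : ℕ) (s : List ℕ) : hle (m, n :: s) (m, s) :=
  hle_cons_iff.2 (Or.inr (Or.inl (hle_refl _)))

lemma hle_head {n n' : ℕ} (h : n ≤ n') (m : ℕ) (s : List ℕ) : hle (m, n :: s) (m, n' :: s) :=
  (HeadLE.cons h s).hle m

lemma hle_of_head_le {n m' : ℕ} (h : n ≤ m') (m : ℕ) (s : List ℕ) : hle (m, n :: s) (m', s) :=
  hle_cons_iff.2 (Or.inr (Or.inr ⟨h, hle_refl _⟩))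

lemma hle_same_fst {m m' : ℕ} {v w : List ℕ} (h : hle (m, v) (m', w)) (k : ℕ) :
    hle (k, v) (k, w) := by
  obtain ⟨t, u, hv, huw, -⟩ := hle_mk_iff.1 h
  exact hle_mk_iff.2 ⟨t, u, hv, huw, Or.inl rfl⟩

lemma headLE_or_hle_of_sum_le {m k : ℕ} {v w : List ℕ} (h : hle (k, v) (k, w)) (hk : v.sum ≤ k) :
    HeadLE v w ∨ hle (m, v) (k, w) := by
  obtain ⟨_ | ⟨b, t⟩, u, rfl, huw, -⟩ := hle_mk_iff.1 h
  · exact Or.inl huw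
  · have hb : b ≤ k := (List.le_sum_of_mem (by simp)).trans hk
    exact Or.inr (hle_mk_iff.2 ⟨b :: t, u, rfl, huw, Or.inr ⟨b, by simp, hb⟩⟩)

lemma not_exists_forall_hle : ¬ ∃ t : HPt, ∀ p : HPt, hle p t := by
  rintro ⟨t, ht⟩
  have h : t.1 + 1 = t.1 :=
    (fst_eq_and_headLE_of_hle_of_length_le (ht (t.1 + 1, [])) (by simp)).1
  omega

end Order

section DirectedSuprema

variable {m : ℕ} {s : List ℕ} {A d : Set HPt}

lemma hle_of_forall_cons_hle {q : HPt} (h : ∀ n, hle (m, n :: s) q) : hle (m, s) q := by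
  obtain ⟨m', w⟩ := q
  rcases hle_cons_iff.1 (h (m' + w.sum + 1)) with ⟨-, hw⟩ | h | ⟨hm', -⟩
  · have := hw.le_sum
    omega
  · exact h
  · omega

lemma isLubRel_of_cofinal_column (hd : ∀ q ∈ d, ∃ n, hle q (m, n :: s))
    (hcol : ∃ᶠ n in atTop, (m, n :: s) ∈ d) : IsLubRel hle d (m, s) := by
  refine ⟨fun q hq => ?_, fun b hb => hle_of_forall_cons_hle fun n => ?_⟩
  · obtain ⟨n, hqn⟩ := hd q hq
    exact hle_trans hqn (hle_tail m n s)
  · obtain ⟨n', hn', hmem⟩ := frequently_atTop.1 hcol n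
    exact hle_trans (hle_head hn' m s) (hb _ hmem)

lemma exists_greatest_or_cofinal_column (hne : d.Nonempty) (hdir : DirectedOn hle d) :
    (∃ a ∈ d, ∀ q ∈ d, hle q a) ∨
      ∃ m s, (∀ q ∈ d, ∃ n, hle q (m, n :: s)) ∧ ∃ᶠ n in atTop, (m, n :: s) ∈ d := by
  obtain ⟨p, hp, hmin⟩ :=
    exists_minimalFor_of_wellFoundedLT (· ∈ d) (fun q : HPt => q.2.length) hne
  have habove : ∀ q ∈ d, ∃ v, HeadLE p.2 v ∧ (p.1, v) ∈ d ∧ hle q (p.1, v) := by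
    intro q hq
    obtain ⟨⟨m, v⟩, hx, hpx, hqx⟩ := hdir p hp q hq
    obtain ⟨rfl : p.1 = m, hv⟩ := fst_eq_and_headLE_of_hle_of_length_le hpx
      ((le_total _ _).elim (hmin hx) id)
    exact ⟨v, hv, hx, hqx⟩
  obtain ⟨m, _ | ⟨n₀, s⟩⟩ := p
  · refine Or.inl ⟨_, hp, fun q hq => ?_⟩
    obtain ⟨_, ⟨⟩, -, hqv⟩ := habove q hq
    exact hqv
  · have hcof : ∀ q ∈ d, ∃ n, (m, n :: s) ∈ d ∧ hle q (m, n :: s) := by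
      intro q hq
      obtain ⟨_, ⟨⟩, hv, hqv⟩ := habove q hq
      exact ⟨_, hv, hqv⟩
    by_cases hbdd : BddAbove {n | (m, n :: s) ∈ d}
    · refine Or.inl ⟨_, Nat.sSup_mem ⟨n₀, hp⟩ hbdd, fun q hq => ?_⟩
      obtain ⟨n, hn, hqn⟩ := hcof q hq
      exact hle_trans hqn (hle_head (le_csSup hbdd hn) m s)
    · exact Or.inr ⟨m, s, fun q hq => (hcof q hq).imp fun _ => And.right,
        Nat.frequently_atTop_iff_infinite.2 (Set.infinite_of_not_bddAbove hbdd)⟩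

lemma isDcpoRel_hle : IsDcpoRel hle := by
  intro d hne hdir
  rcases exists_greatest_or_cofinal_column hne hdir with ⟨a, ha, hmax⟩ | ⟨m, s, hd, hcol⟩
  · exact ⟨a, hmax, fun b hb => hb a ha⟩
  · exact ⟨(m, s), isLubRel_of_cofinal_column hd hcol⟩

lemma scottClosedRel_hle_iff :
    ScottClosedRel hle A ↔
      (∀ x y, hle x y → y ∈ A → x ∈ A) ∧ ∀ m s, (∀ n, (m, n :: s) ∈ A) → (m, s) ∈ A := by
  refine ⟨fun ⟨hlow, hsup⟩ => ⟨hlow, fun m s h => ?_⟩, fun ⟨hlow, hcol⟩ => ⟨hlow, ?_⟩⟩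
  · have hmono : ∀ n n', n ≤ n' → hle (m, n :: s) (m, n' :: s) := fun _ _ h => hle_head h m s
    refine hsup (Set.range fun n : ℕ => (m, n :: s)) (Set.range_subset_iff.2 h)
      (Set.range_nonempty _) (directedOn_range.2 (directed_of_isDirected_le hmono)) _
      (isLubRel_of_cofinal_column ?_ (Frequently.of_forall fun n => ⟨n, rfl⟩))
    rintro _ ⟨n, rfl⟩
    exact ⟨n, hle_refl _⟩
  · intro d hdA hne hdir a ha
    rcases exists_greatest_or_cofinal_column hne hdir with ⟨b, hb, hmax⟩ | ⟨m, s, hd, hfreq⟩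
    · exact hlow _ _ (ha.2 b hmax) (hdA hb)
    · refine hlow _ _ (ha.2 _ (isLubRel_of_cofinal_column hd hfreq).1) (hcol m s fun n => ?_)
      obtain ⟨n', hn', hmem⟩ := frequently_atTop.1 hfreq n
      exact hlow _ _ (hle_head hn' m s) (hdA hmem)

lemma ScottClosedRel.mem_of_forall_cons_mem (hA : ScottClosedRel hle A)
    (h : ∀ n, (m, n :: s) ∈ A) : (m, s) ∈ A :=
  (scottClosedRel_hle_iff.1 hA).2 m s h

lemma ScottClosedRel.level_mem_of_frequently (hA : ScottClosedRel hle A)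
    (h : ∃ᶠ k in atTop, (k, s) ∈ A) (m : ℕ) : (m, s) ∈ A := by
  refine hA.mem_of_forall_cons_mem fun n => ?_
  obtain ⟨k, hnk, hk⟩ := frequently_atTop.1 h n
  exact hA.1 _ _ (hle_of_head_le hnk m s) hk

end DirectedSuprema

section Levels

variable {m : ℕ} {s : List ℕ}

/-- The down-closure `↓L_s` of the level `L_s`. -/
def levelDownset (s : List ℕ) : Set HPt := {y | ∃ m : ℕ, hle y (m, s)}

lemma mk_mem_levelDownset_iff {v : List ℕ} (k : ℕ) :
    (m, v) ∈ levelDownset s ↔ hle (k, v) (k, s) :=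
  ⟨fun ⟨_, h⟩ => hle_same_fst h k, fun h => ⟨m, hle_same_fst h m⟩⟩

lemma mem_levelDownset_self (m : ℕ) (s : List ℕ) : (m, s) ∈ levelDownset s := ⟨m, hle_refl _⟩

lemma ScottClosedRel.levelDownset_subset_iff {A : Set HPt} (hA : ScottClosedRel hle A) :
    levelDownset s ⊆ A ↔ ∀ m : ℕ, (m, s) ∈ A :=
  ⟨fun h m => h (mem_levelDownset_self m s), fun h _ ⟨m, hy⟩ => hA.1 _ _ hy (h m)⟩

lemma scottClosedRel_levelDownset (s : List ℕ) : ScottClosedRel hle (levelDownset s) := by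
  refine scottClosedRel_hle_iff.2 ⟨fun x y hxy ⟨m, hy⟩ => ⟨m, hle_trans hxy hy⟩, fun m r h => ?_⟩
  have hcol := (mk_mem_levelDownset_iff m).1 (h (s.sum + 1))
  rw [mk_mem_levelDownset_iff m]
  rcases hle_cons_iff.1 hcol with ⟨-, hr⟩ | hr | ⟨-, hr⟩
  · have := hr.le_sum
    omega
  · exact hr
  · exact hr

lemma scottIrredRel_levelDownset (s : List ℕ) : ScottIrredRel hle (levelDownset s) := by
  refine ⟨⟨_, mem_levelDownset_self 0 s⟩, fun B C hB hC h => ?_⟩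
  rw [hB.levelDownset_subset_iff, hC.levelDownset_subset_iff]
  have hfreq : ∃ᶠ m in atTop, (m, s) ∈ B ∨ (m, s) ∈ C :=
    Frequently.of_forall fun m => h (mem_levelDownset_self m s)
  exact (frequently_or_distrib.1 hfreq).imp hB.level_mem_of_frequently hC.level_mem_of_frequently

/-- The element `↓L_s` of `ℍ̂`. -/
def levelSob (s : List ℕ) : HSob :=
  ⟨levelDownset s, scottClosedRel_levelDownset s, scottIrredRel_levelDownset s⟩

lemma levelSob_le_iff {B : HSob} : levelSob s ≤ B ↔ ∀ m : ℕ, (m, s) ∈ B.1 :=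
  B.2.1.levelDownset_subset_iff

lemma le_levelSob_nil (A : HSob) : A ≤ levelSob [] := fun ⟨m, w⟩ _ =>
  ⟨m, hle_mk_iff.2 ⟨w, [], by simp, .nil, Or.inl rfl⟩⟩

end Levels

section Classification

variable {A N : Set HPt} {m : ℕ} {v : List ℕ}

lemma tail_notMem_of_mem_relMaximals {n : ℕ} (h : (m, n :: v) ∈ relMaximals hle A) :
    (m, v) ∉ A := fun hv => by
  simpa using h.2 _ hv (hle_tail m n v)

lemma frequently_exists_headLE_of_column_subset (hN : N ⊆ relMaximals hle A) (hA : (m, v) ∈ A)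
    (hcol : ∀ n, (m, n :: v) ∈ downClosure hle N) (hv : (m, v) ∉ downClosure hle N) :
    ∃ᶠ k in atTop, ∃ w, HeadLE v w ∧ (k, w) ∈ N := by
  refine frequently_atTop.2 fun K => ?_
  obtain ⟨⟨k, w⟩, hkw, hle_kw⟩ := hcol (K + v.sum)
  have hnle : ¬ hle (m, v) (k, w) := fun h => hv ⟨_, hkw, h⟩
  rcases hle_cons_iff.1 hle_kw with ⟨rfl, ⟨⟩⟩ | h | ⟨hk, h⟩
  · exact absurd hA (tail_notMem_of_mem_relMaximals (hN hkw))
  · exact absurd h hnle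
  · exact ⟨k, by omega, w, (headLE_or_hle_of_sum_le h (by omega)).resolve_right hnle, hkw⟩

lemma ScottClosedRel.exists_frequently_mem_of_headLE (hA : ScottClosedRel hle A)
    (hN : N ⊆ relMaximals hle A) (h : ∃ᶠ k in atTop, ∃ w, HeadLE v w ∧ (k, w) ∈ N) :
    ∃ w, HeadLE v w ∧ ∃ᶠ k in atTop, (k, w) ∈ N := by
  by_contra! hfin
  cases v with
  | nil =>
    obtain ⟨k, ⟨_, ⟨⟩, hkN⟩, hk⟩ := (h.and_eventually (hfin [] .nil)).exists
    exact hk hkN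
  | cons a v =>
    -- With only finitely many points of `N` on each level `c :: v`, their heads `c` are unbounded,
    -- so `A` contains all these levels, hence the level `v` above them.
    have hheads : ∀ c, ∃ᶠ k in atTop, ∃ n, c < n ∧ (k, n :: v) ∈ N := by
      intro c
      have hsmall : ∀ᶠ k in atTop, ∀ n ∈ Set.Iic c, a ≤ n → (k, n :: v) ∉ N :=
        (Set.finite_Iic c).eventually_all.2 fun n _ =>
          eventually_imp_distrib_left.2 fun han => hfin _ (.cons han v)
      refine (h.and_eventually hsmall).mono ?_
      rintro k ⟨⟨_, hw, hkN⟩, hk⟩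
      cases hw with
      | cons han => exact ⟨_, not_le.1 fun hnc => hk _ hnc han hkN, hkN⟩
    have hlevel : ∀ k, (k, v) ∈ A := fun k =>
      hA.mem_of_forall_cons_mem fun c => hA.level_mem_of_frequently
        ((hheads c).mono fun j ⟨_, hcn, hjN⟩ => hA.1 _ _ (hle_head hcn.le j v) (hN hjN).1) k
    obtain ⟨k, n, -, hkN⟩ := (hheads 0).exists
    exact tail_notMem_of_mem_relMaximals (hN hkN) (hlevel k)

lemma ScottClosedRel.downClosure_of_subset_relMaximals (hA : ScottClosedRel hle A)
    (hN : N ⊆ relMaximals hle A)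
    (hlevel : ∀ w, (∃ᶠ k in atTop, (k, w) ∈ N) → ∀ m, (m, w) ∈ downClosure hle N) :
    ScottClosedRel hle (downClosure hle N) := by
  refine scottClosedRel_hle_iff.2
    ⟨fun x y hxy ⟨z, hz, hyz⟩ => ⟨z, hz, hle_trans hxy hyz⟩, fun m v hcol => ?_⟩
  by_contra hv
  have hNA : downClosure hle N ⊆ A := hA.downClosure_subset fun _ hx => (hN hx).1
  obtain ⟨w, hvw, hw⟩ := hA.exists_frequently_mem_of_headLE hN <|
    frequently_exists_headLE_of_column_subset hN
      (hA.mem_of_forall_cons_mem fun n => hNA (hcol n)) hcol hv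
  obtain ⟨x, hx, hwx⟩ := hlevel w hw m
  exact hv ⟨x, hx, hle_trans (hvw.hle m) hwx⟩

lemma ScottIrredRel.eq_levelDownset (hA : ScottClosedRel hle A) (hI : ScottIrredRel hle A)
    {s : List ℕ} (hs : ∀ m : ℕ, (m, s) ∈ A) (hm : (m, s) ∈ relMaximals hle A) :
    A = levelDownset s := by
  have hdiff : ScottClosedRel hle (downClosure hle (relMaximals hle A \ levelDownset s)) := by
    refine hA.downClosure_of_subset_relMaximals Set.sdiff_subset fun w hw k => ?_
    have hwA : (k, w) ∈ A := hA.level_mem_of_frequently (hw.mono fun _ h => h.1.1) k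
    obtain ⟨b, hb, hkb⟩ := hA.exists_relMaximals isDcpoRel_hle hwA
    refine ⟨b, ⟨hb, fun hbs => ?_⟩, hkb⟩
    obtain ⟨j, -, hj⟩ := hw.exists
    have hks := (scottClosedRel_levelDownset s).1 _ _ hkb hbs
    exact hj ((mk_mem_levelDownset_iff 0).2 ((mk_mem_levelDownset_iff 0).1 hks))
  exact (hI.subset_of_relMaximals_mem isDcpoRel_hle hA (scottClosedRel_levelDownset s) hdiff hm
    (mem_levelDownset_self m s)).antisymm (hA.levelDownset_subset_iff.2 hs)

lemma ScottIrredRel.eq_principal (hA : ScottClosedRel hle A) (hI : ScottIrredRel hle A)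
    (hmax : ∀ s, (∀ m : ℕ, (m, s) ∈ A) → ∀ m : ℕ, (m, s) ∉ relMaximals hle A)
    {x : HPt} (hx : x ∈ relMaximals hle A) : A = {y | hle y x} := by
  have hdiff : ScottClosedRel hle (downClosure hle (relMaximals hle A \ {y | hle y x})) := by
    refine hA.downClosure_of_subset_relMaximals Set.sdiff_subset fun w hw => ?_
    obtain ⟨k, hk, -⟩ := hw.exists
    exact absurd hk (hmax w (hA.level_mem_of_frequently (hw.mono fun _ h => h.1.1)) k)
  exact (hI.subset_of_relMaximals_mem isDcpoRel_hle hA (scottClosedRel_principal x) hdiff hx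
    (hle_refl x)).antisymm fun y hy => hA.1 _ _ hy hx.1

theorem scottClosedRel_and_scottIrredRel_hle_iff :
    ScottClosedRel hle A ∧ ScottIrredRel hle A ↔
      (∃ x, A = {y | hle y x}) ∨ ∃ s, A = levelDownset s := by
  constructor
  · rintro ⟨hA, hI⟩
    by_cases h : ∃ s, (∀ m : ℕ, (m, s) ∈ A) ∧ ∃ m : ℕ, (m, s) ∈ relMaximals hle A
    · obtain ⟨s, hs, m, hm⟩ := h
      exact Or.inr ⟨s, hI.eq_levelDownset hA hs hm⟩
    · push Not at h
      obtain ⟨p, hp⟩ := hI.1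
      obtain ⟨x, hx, -⟩ := hA.exists_relMaximals isDcpoRel_hle hp
      exact Or.inl ⟨x, hI.eq_principal hA h hx⟩
  · rintro (⟨x, rfl⟩ | ⟨s, rfl⟩)
    · exact ⟨scottClosedRel_principal x, scottIrredRel_principal x⟩
    · exact ⟨scottClosedRel_levelDownset s, scottIrredRel_levelDownset s⟩

lemma eq_principal_or_eq_levelSob (B : HSob) :
    (∃ x, B = RelSob.principal hle x) ∨ ∃ s, B = levelSob s :=
  (scottClosedRel_and_scottIrredRel_hle_iff.1 B.2).imp
    (Exists.imp fun _ => Subtype.ext) (Exists.imp fun _ => Subtype.ext)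

end Classification

section Isomorphism

lemma levelSob_cons_le_principal (n : ℕ) (s : List ℕ) :
    levelSob (n :: s) ≤ RelSob.principal hle (n, s) :=
  levelSob_le_iff.2 fun m => hle_of_head_le le_rfl m s

lemma monotone_levelSob_cons (s : List ℕ) : Monotone fun n => levelSob (n :: s) :=
  fun _ _ h => levelSob_le_iff.2 fun m => ⟨m, hle_head h m s⟩

lemma isLUB_range_levelSob_cons (s : List ℕ) :
    IsLUB (Set.range fun n => levelSob (n :: s)) (levelSob s) := by
  refine ⟨?_, fun B hB => levelSob_le_iff.2 fun m => B.2.1.mem_of_forall_cons_mem fun n => ?_⟩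
  · rintro _ ⟨n, rfl⟩
    exact levelSob_le_iff.2 fun m => ⟨m, hle_tail m n s⟩
  · exact levelSob_le_iff.1 (hB ⟨n, rfl⟩) m

lemma ScottClosed.mem_of_forall_principal_mem {𝒜 : Set HSob} (h𝒜 : ScottClosed 𝒜) (B : HSob)
    (h : ∀ x ∈ B.1, RelSob.principal hle x ∈ 𝒜) : B ∈ 𝒜 := by
  rcases eq_principal_or_eq_levelSob B with ⟨x, rfl⟩ | ⟨s, rfl⟩
  · exact h x (hle_refl x)
  · refine h𝒜.2 _ (Set.range_subset_iff.2 fun n => ?_) (Set.range_nonempty _)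
      (directedOn_range.2 (monotone_levelSob_cons s).directed_le) _ (isLUB_range_levelSob_cons s)
    exact h𝒜.1 (levelSob_cons_le_principal n s) (h (n, s) (mem_levelDownset_self n s))

/-- The isomorphism `Γ(ℍ) ≅ Γ(ℍ̂)`. -/
def scottClosedOrderIsoHSob :
    {A : Set HPt // ScottClosedRel hle A} ≃o {𝒜 : Set HSob // ScottClosed 𝒜} :=
  scottClosedRelOrderIsoRelSob fun _ h𝒜 => h𝒜.mem_of_forall_principal_mem

lemma not_exists_orderIso_hSob :
    ¬ ∃ f : HPt → HSob, Function.Bijective f ∧ ∀ p q : HPt, hle p q ↔ f p ≤ f q := by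
  rintro ⟨f, hf, hf_le⟩
  obtain ⟨t, ht⟩ := hf.2 (levelSob [])
  exact not_exists_forall_hle ⟨t, fun p => (hf_le p t).2 (ht ▸ le_levelSob_nil (f p))⟩

/-- The dcpo `ℍ`. A type synonym is needed because `HPt` already carries the componentwise order
of `ℕ × List ℕ`. -/
def HDcpo : Type := HPt

instance : PartialOrder HDcpo where
  le := hle
  le_refl := hle_refl
  le_trans _ _ _ := hle_trans
  le_antisymm _ _ := hle_antisymm

lemma isDcpo_hDcpo : IsDcpo HDcpo := IsDcpoRel.isDcpo isDcpoRel_hle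

end Isomorphism

/-- the closed irreducible subsets of ℍ are exactly the principal downsets
↓x and the downsets ↓L_s of levels; Γ(ℍ) ≅ Γ(ℍ̂); ℍ̂ has a largest element while ℍ does
not, so ℍ and ℍ̂ are not order isomorphic; hence the class of all dcpos is not
Γ-faithful. -/
theorem H_answers_HoZhao_problem :
    (∀ A : Set HPt, (ScottClosedRel hle A ∧ ScottIrredRel hle A) ↔
      ((∃ x : HPt, A = {y : HPt | hle y x}) ∨
        (∃ s : List ℕ, A = {y : HPt | ∃ m : ℕ, hle y (m, s)}))) ∧
    Nonempty ({A : Set HPt // ScottClosedRel hle A} ≃o {𝒜 : Set HSob // ScottClosed 𝒜}) ∧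
    (∃ T : HSob, ∀ A : HSob, A ≤ T) ∧
    (¬ ∃ t : HPt, ∀ p : HPt, hle p t) ∧
    (¬ ∃ f : HPt → HSob, Function.Bijective f ∧ ∀ p q : HPt, hle p q ↔ f p ≤ f q) ∧
    ¬ (∀ (D E : Type) [PartialOrder D] [PartialOrder E], IsDcpo D → IsDcpo E →
        Nonempty ({S : Set D // ScottClosed S} ≃o {S : Set E // ScottClosed S}) →
        Nonempty (D ≃o E)) := by
  refine ⟨fun A => scottClosedRel_and_scottIrredRel_hle_iff, ⟨scottClosedOrderIsoHSob⟩,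
    ⟨levelSob [], le_levelSob_nil⟩, not_exists_forall_hle, not_exists_orderIso_hSob, ?_⟩
  intro hfaithful
  obtain ⟨f⟩ := hfaithful HDcpo HSob isDcpo_hDcpo isDcpo_relSob
    ⟨(scottClosedOrderIsoRel HDcpo).trans scottClosedOrderIsoHSob⟩
  exact not_exists_orderIso_hSob ⟨f, f.bijective, fun p q => f.map_rel_iff.symm⟩

end HoZhao
end
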